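/- Let m ≥ 5 be an odd integer, n = 3(2^m − 1), and let β be a primitive n-th root of unity in F_{2^{2m}}. Then the cyclic code of length 2n over F_2 with generator polynomial (x−1) m_β(x)^2 m_{β^3}(x)^2 m_{β^{−1}}(x) m_{β^{−3}}(x) has dimension 6(2^m − 1) − 9m − 1 and minimum distance at least 10. -/

import Mathlib

open Polynomial

/-- The cyclic code of length `N` over the field `F` generated by the polynomial `g`.
Codewords are identified with the representatives of degree `< N` of the elements of the
ideal generated by `g` in `F[x]/(x^N - 1)`; equivalently, a polynomial `c` of degree `< N`
is a codeword iff `c ∈ (g, x^N - 1)` as an ideal of `F[x]`. -/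
noncomputable def cyclicCode (F : Type*) [Field F] (N : ℕ) (g : Polynomial F) :
    Submodule F (Polynomial F) :=
  Polynomial.degreeLT F N ⊓
    Submodule.restrictScalars F (Ideal.span ({g, Polynomial.X ^ N - 1} : Set (Polynomial F)))

/-- The minimum distance (equivalently, the minimum Hamming weight of a nonzero codeword,
a codeword being identified with its coefficient vector) of a linear code of polynomials. -/
noncomputable def minDist {F : Type*} [Field F] (C : Submodule F (Polynomial F)) : ℕ :=
  sInf {w | ∃ c ∈ C, c ≠ 0 ∧ c.support.card = w}

/-!
Let `g` be the generator and `c` a nonzero codeword. Since squaring fixes the coefficients of `c`,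
the roots `β`, `β³`, `1`, `β⁻¹`, `β⁻³` of `g` give the nine consecutive roots `β⁻⁴, …, β⁴` of `c`,
of which `β, …, β⁴` are double. If all exponents of `c` have the same parity, then the odd order
`n` of `β` separates them although they range up to `2n`, and the BCH bound gives weight at least
`9 + 1`. Otherwise the odd part `X c'` and the even part `(X c)'` of `c` are both nonzero and both
vanish at `β, …, β⁴`, so each of them has weight at least `4 + 1`.

For the dimension, `2` has multiplicative order `m` modulo `2^m - 1` and, `m` being odd, order `2m`
modulo `3 (2^m - 1)`; these are the degrees of the minimal polynomials. The minimal polynomials are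
distinct because `-1` is not a power of `2` modulo `2^m - 1`, so that `g` divides `(x^n - 1)²`.
-/

section BCHBound

variable {F K : Type*} [Field F] [Field K] [Algebra F K]

theorem aeval_zpow_add_natCast_eq_sum {x : K} (hx : x ≠ 0) (c : F[X]) (a : ℤ) (j : ℕ) :
    aeval (x ^ (a + j)) c =
      ∑ i ∈ c.support, algebraMap F K (c.coeff i) * (x ^ a) ^ i * (x ^ i) ^ j := by
  rw [aeval_def, eval₂_eq_sum, Polynomial.sum]
  refine Finset.sum_congr rfl fun i _ => ?_
  rw [zpow_add₀ hx, zpow_natCast, mul_pow, pow_right_comm x j i, mul_assoc]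

theorem lt_card_support_of_aeval_zpow_eq_zero {c : F[X]} (hc : c ≠ 0) {x : K} (hx : x ≠ 0)
    (hinj : Set.InjOn (fun i : ℕ => x ^ i) c.support) {a : ℤ} {δ : ℕ}
    (hroot : ∀ j < δ, aeval (x ^ (a + j)) c = 0) : δ < c.support.card := by
  by_contra! hδ
  let e := c.support.equivFin
  have hcoeff : (fun j : Fin c.support.card =>
      algebraMap F K (c.coeff (e.symm j)) * (x ^ a) ^ (e.symm j : ℕ)) = 0 := by
    have hinj_fin : Function.Injective fun j : Fin c.support.card => x ^ (e.symm j : ℕ) :=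
      fun j k hjk => e.symm.injective (Subtype.ext (hinj (e.symm j).2 (e.symm k).2 hjk))
    refine Matrix.eq_zero_of_forall_pow_sum_mul_pow_eq_zero hinj_fin fun j => ?_
    rw [← hroot j (j.2.trans_le hδ), aeval_zpow_add_natCast_eq_sum hx,
      ← Finset.sum_coe_sort c.support]
    exact e.symm.sum_comp fun i : c.support =>
      algebraMap F K (c.coeff i) * (x ^ a) ^ (i : ℕ) * (x ^ (i : ℕ)) ^ (j : ℕ)
  obtain ⟨i, hi⟩ := support_nonempty.2 hc
  have hzero := congrFun hcoeff (e ⟨i, hi⟩)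
  simp only [Equiv.symm_apply_apply, Pi.zero_apply, mul_eq_zero, map_eq_zero] at hzero
  exact hzero.elim (mem_support_iff.1 hi) (pow_ne_zero _ (zpow_ne_zero _ hx))

end BCHBound

section RepeatedRoots

theorem support_X_mul_derivative {R : Type*} [CommSemiring R] [CharP R 2] (c : R[X]) :
    (X * derivative c).support = {i ∈ c.support | Odd i} := by
  ext i
  have hcoeff : (X * derivative c).coeff i = c.coeff i * i := by
    cases i <;> simp [coeff_X_mul, coeff_derivative]
  rw [mem_support_iff, hcoeff, CharTwo.natCast_eq_ite, Finset.mem_filter, mem_support_iff]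
  split_ifs with hi <;> simp [hi, ← Nat.not_even_iff_odd]

theorem support_derivative_X_mul {R : Type*} [CommSemiring R] [CharP R 2] (c : R[X]) :
    (derivative (X * c)).support = {i ∈ c.support | ¬Odd i} := by
  ext i
  have hcoeff : (derivative (X * c)).coeff i = c.coeff i * (i + 1 : ℕ) := by
    simp only [coeff_derivative, coeff_X_mul, Nat.cast_succ]
  rw [mem_support_iff, hcoeff, CharTwo.natCast_eq_ite, Finset.mem_filter, mem_support_iff]
  split_ifs with hi <;> simp_all [Nat.even_add_one]

theorem injOn_pow_of_mod_two_eq {M : Type*} [CommMonoid M] {n : ℕ} (hn : Odd n) {x : M}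
    (hx : IsPrimitiveRoot x n) {s : Set ℕ} (hlt : ∀ i ∈ s, i < 2 * n) {r : ℕ}
    (hparity : ∀ i ∈ s, i % 2 = r) : Set.InjOn (fun i => x ^ i) s := by
  intro i hi j hj hij
  have hmod : i ≡ j [MOD n] := by
    rw [hx.eq_orderOf]
    exact (hx.isOfFinOrder hn.pos.ne').pow_eq_pow_iff_modEq.1 hij
  have hmod_two : i ≡ j [MOD 2] := (hparity i hi).trans (hparity j hj).symm
  have hmod_two_mul : i ≡ j [MOD 2 * n] :=
    (Nat.modEq_and_modEq_iff_modEq_mul (Nat.coprime_two_left.2 hn)).1 ⟨hmod_two, hmod⟩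
  exact hmod_two_mul.eq_of_lt_of_lt (hlt i hi) (hlt j hj)

variable {F K : Type*} [Field F] [Field K] [Algebra F K]

theorem lt_card_support_of_mod_two_eq {n : ℕ} (hn : Odd n) {x : K} (hx : IsPrimitiveRoot x n)
    {c : F[X]} (hc : c ≠ 0) (hlt : ∀ i ∈ c.support, i < 2 * n) {r : ℕ}
    (hparity : ∀ i ∈ c.support, i % 2 = r) {a : ℤ} {δ : ℕ}
    (hroot : ∀ j < δ, aeval (x ^ (a + j)) c = 0) : δ < c.support.card :=
  lt_card_support_of_aeval_zpow_eq_zero hc (hx.ne_zero hn.pos.ne')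
    (injOn_pow_of_mod_two_eq hn hx hlt hparity) hroot

theorem min_le_card_support_of_double_roots [CharP F 2] {n : ℕ} (hn : Odd n) {x : K}
    (hx : IsPrimitiveRoot x n) {c : F[X]} (hc : c ≠ 0) (hdeg : c.natDegree < 2 * n)
    {a b : ℤ} {δ ε : ℕ} (hroot : ∀ j < δ, aeval (x ^ (a + j)) c = 0)
    (hdouble : ∀ j < ε, aeval (x ^ (b + j)) c = 0 ∧ aeval (x ^ (b + j)) (derivative c) = 0) :
    min (δ + 1) (2 * (ε + 1)) ≤ c.support.card := by
  have hlt : ∀ i ∈ c.support, i < 2 * n := fun i hi =>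
    (le_natDegree_of_mem_supp i hi).trans_lt hdeg
  have hodd := support_X_mul_derivative c
  have heven := support_derivative_X_mul c
  rcases eq_or_ne (X * derivative c) 0 with hodd₀ | hodd₀
  · rw [hodd₀, support_zero, eq_comm, Finset.filter_eq_empty_iff] at hodd
    exact min_le_of_left_le (lt_card_support_of_mod_two_eq hn hx hc hlt
      (fun i hi => Nat.not_odd_iff.1 (hodd hi)) hroot)
  rcases eq_or_ne (derivative (X * c)) 0 with heven₀ | heven₀
  · rw [heven₀, support_zero, eq_comm, Finset.filter_eq_empty_iff] at heven
    exact min_le_of_left_le (lt_card_support_of_mod_two_eq hn hx hc hlt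
      (fun i hi => Nat.odd_iff.1 (not_not.1 (heven hi))) hroot)
  have hodd_mem (i : ℕ) (hi : i ∈ (X * derivative c).support) : i ∈ c.support ∧ Odd i := by
    rwa [hodd, Finset.mem_filter] at hi
  have heven_mem (i : ℕ) (hi : i ∈ (derivative (X * c)).support) : i ∈ c.support ∧ ¬Odd i := by
    rwa [heven, Finset.mem_filter] at hi
  have hodd_card : ε < (X * derivative c).support.card :=
    lt_card_support_of_mod_two_eq hn hx hodd₀ (fun i hi => hlt i (hodd_mem i hi).1)
      (fun i hi => Nat.odd_iff.1 (hodd_mem i hi).2)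
      fun j hj => by rw [map_mul, (hdouble j hj).2, mul_zero]
  have heven_card : ε < (derivative (X * c)).support.card :=
    lt_card_support_of_mod_two_eq hn hx heven₀ (fun i hi => hlt i (heven_mem i hi).1)
      (fun i hi => Nat.not_odd_iff.1 (heven_mem i hi).2)
      (a := b) fun j hj => by simp [hdouble j hj]
  have hcard := Finset.card_filter_add_card_filter_not (s := c.support) Odd
  rw [← hodd, ← heven] at hcard
  exact min_le_of_right_le (by omega)

end RepeatedRoots

section BinaryPolynomials

theorem aeval_sq_eq_sq_aeval {A : Type*} [CommRing A] [Algebra (ZMod 2) A] (c : (ZMod 2)[X])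
    (x : A) : aeval (x ^ 2) c = aeval x c ^ 2 := by
  rw [← expand_aeval, ZMod.expand_card, map_pow]

theorem aeval_pow_eq_zero_of_le_four {A : Type*} [CommRing A] [Algebra (ZMod 2) A]
    {c : (ZMod 2)[X]} {x : A} (h₁ : aeval x c = 0) (h₃ : aeval (x ^ 3) c = 0) {j : ℕ}
    (hj₀ : j ≠ 0) (hj : j ≤ 4) : aeval (x ^ j) c = 0 := by
  have h₂ : aeval (x ^ 2) c = 0 := by rw [aeval_sq_eq_sq_aeval, h₁, zero_pow two_ne_zero]
  have h₄ : aeval (x ^ 4) c = 0 := by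
    rw [pow_mul x 2 2, aeval_sq_eq_sq_aeval, h₂, zero_pow two_ne_zero]
  interval_cases j
  · exact absurd rfl hj₀
  · rwa [pow_one]
  all_goals assumption

theorem aeval_zpow_eq_zero_of_abs_le_four {K : Type*} [Field K] [Algebra (ZMod 2) K]
    {c : (ZMod 2)[X]} {x : K} (h₀ : aeval (1 : K) c = 0) (h₁ : aeval x c = 0)
    (h₃ : aeval (x ^ 3) c = 0) (hinv₁ : aeval x⁻¹ c = 0) (hinv₃ : aeval (x ^ 3)⁻¹ c = 0)
    {k : ℤ} (hk : |k| ≤ 4) : aeval (x ^ k) c = 0 := by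
  rw [abs_le] at hk
  rcases eq_or_ne k 0 with rfl | hk₀
  · rwa [zpow_zero]
  rw [← inv_pow] at hinv₃
  obtain ⟨j, rfl | rfl⟩ := k.eq_nat_or_neg
  · rw [zpow_natCast]
    exact aeval_pow_eq_zero_of_le_four h₁ h₃ (by omega) (by omega)
  · rw [zpow_neg, zpow_natCast, ← inv_pow]
    exact aeval_pow_eq_zero_of_le_four hinv₁ hinv₃ (by omega) (by omega)

end BinaryPolynomials

section CyclicCodes

variable {F : Type*} [Field F] {N : ℕ} {g : F[X]}

theorem mem_cyclicCode_iff (hg : g ∣ X ^ N - 1) {c : F[X]} :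
    c ∈ cyclicCode F N g ↔ c ∈ degreeLT F N ∧ g ∣ c := by
  have hspan : Ideal.span {g, X ^ N - 1} = Ideal.span {g} := by
    rw [Ideal.span_insert, sup_eq_left, Ideal.span_singleton_le_span_singleton]
    exact hg
  rw [cyclicCode, hspan, Submodule.mem_inf, Submodule.restrictScalars_mem,
    Ideal.mem_span_singleton]

theorem mul_mem_degreeLT_iff (hg : g ≠ 0) {q : F[X]} :
    g * q ∈ degreeLT F N ↔ q ∈ degreeLT F (N - g.natDegree) := by
  rcases eq_or_ne q 0 with rfl | hq
  · simp only [mul_zero, Submodule.zero_mem]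
  rw [mem_degreeLT, mem_degreeLT, ← natDegree_lt_iff_degree_lt hq,
    ← natDegree_lt_iff_degree_lt (mul_ne_zero hg hq), natDegree_mul hg hq]
  omega

theorem finrank_cyclicCode (hg : g ∣ X ^ N - 1) (hg₀ : g ≠ 0) :
    Module.finrank F (cyclicCode F N g) = N - g.natDegree := by
  have hmap : (degreeLT F (N - g.natDegree)).map (LinearMap.mulLeft F g) = cyclicCode F N g := by
    ext c
    rw [mem_cyclicCode_iff hg, Submodule.mem_map]
    constructor
    · rintro ⟨q, hq, rfl⟩
      exact ⟨(mul_mem_degreeLT_iff hg₀).2 hq, dvd_mul_right g q⟩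
    · rintro ⟨hdeg, q, rfl⟩
      exact ⟨q, (mul_mem_degreeLT_iff hg₀).1 hdeg, rfl⟩
  rw [← hmap, (Submodule.equivMapOfInjective _ (mul_right_injective₀ hg₀) _).symm.finrank_eq,
    (degreeLTEquiv F _).finrank_eq, Module.finrank_fin_fun]

theorem le_minDist_cyclicCode (hg : g ∣ X ^ N - 1) (hg₀ : g ≠ 0) (hdeg : g.natDegree < N) {d : ℕ}
    (hd : ∀ c : F[X], c ≠ 0 → c.natDegree < N → g ∣ c → d ≤ c.support.card) :
    d ≤ minDist (cyclicCode F N g) := by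
  refine le_csInf ⟨_, g, (mem_cyclicCode_iff hg).2 ⟨?_, dvd_rfl⟩, hg₀, rfl⟩ ?_
  · rwa [mem_degreeLT, ← natDegree_lt_iff_degree_lt hg₀]
  · rintro _ ⟨c, hc, hc₀, rfl⟩
    obtain ⟨hcdeg, hgc⟩ := (mem_cyclicCode_iff hg).1 hc
    rw [mem_degreeLT, ← natDegree_lt_iff_degree_lt hc₀] at hcdeg
    exact hd c hc₀ hcdeg hgc

end CyclicCodes

section MultiplicativeOrder

theorem orderOf_natCast_dvd_iff {b : ℕ} (hb : b ≠ 0) (k j : ℕ) :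
    orderOf (b : ZMod k) ∣ j ↔ k ∣ b ^ j - 1 := by
  rw [orderOf_dvd_iff_pow_eq_one, ← Nat.cast_pow, ← Nat.cast_one, eq_comm,
    ZMod.natCast_eq_natCast_iff, Nat.modEq_iff_dvd' (Nat.one_le_pow _ _ hb.bot_lt)]

theorem lt_pow_orderOf_natCast {b k : ℕ} (hb : 1 < b) (hord : orderOf (b : ZMod k) ≠ 0) :
    k < b ^ orderOf (b : ZMod k) := by
  have hpow : 1 < b ^ orderOf (b : ZMod k) := Nat.one_lt_pow hord hb
  have hdvd := (orderOf_natCast_dvd_iff (by omega) k _).1 (dvd_refl (orderOf (b : ZMod k)))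
  have := Nat.le_of_dvd (by omega) hdvd
  omega

theorem orderOf_natCast_zmod_pow_sub_one {b m : ℕ} (hb : 1 < b) (hm : m ≠ 0) :
    orderOf (b : ZMod (b ^ m - 1)) = m := by
  have hdvd : orderOf (b : ZMod (b ^ m - 1)) ∣ m :=
    (orderOf_natCast_dvd_iff (by omega) _ m).2 dvd_rfl
  have hlt := lt_pow_orderOf_natCast hb (ne_zero_of_dvd_ne_zero hm hdvd)
  have hle : m ≤ orderOf (b : ZMod (b ^ m - 1)) := (Nat.pow_le_pow_iff_right hb).1 (by omega)
  exact le_antisymm (Nat.le_of_dvd hm.bot_lt hdvd) hle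

theorem orderOf_natCast_zmod_succ_mul_pow_sub_one {b m : ℕ} (hb : 1 < b) (hm : Odd m) :
    orderOf (b : ZMod ((b + 1) * (b ^ m - 1))) = 2 * m := by
  have hdvd : orderOf (b : ZMod ((b + 1) * (b ^ m - 1))) ∣ 2 * m := by
    have hsucc : b + 1 ∣ b ^ m + 1 := by simpa using hm.nat_add_dvd_pow_add_pow b 1
    have hfactor : b ^ (2 * m) - 1 = (b ^ m + 1) * (b ^ m - 1) := by
      rw [mul_comm 2 m, pow_mul]
      exact Nat.sq_sub_sq (b ^ m) 1
    rw [orderOf_natCast_dvd_iff (by omega), hfactor]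
    exact Nat.mul_dvd_mul_right hsucc _
  have hlt : m < orderOf (b : ZMod ((b + 1) * (b ^ m - 1))) := by
    have hpow : 1 < b ^ m := Nat.one_lt_pow hm.pos.ne' hb
    have hmul : 2 * (b ^ m - 1) ≤ (b + 1) * (b ^ m - 1) := Nat.mul_le_mul_right _ (by omega)
    have := lt_pow_orderOf_natCast hb (ne_zero_of_dvd_ne_zero (by have := hm.pos; omega) hdvd)
    exact (Nat.pow_lt_pow_iff_right hb).1 (by omega)
  exact (Nat.eq_of_dvd_of_lt_two_mul (by have := hm.pos; omega) hdvd (by omega)).symm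

theorem not_pow_sub_one_dvd_pow_add_one {b m : ℕ} (hb : 1 < b) (hm : 2 < m) (i : ℕ) :
    ¬b ^ m - 1 ∣ b ^ i + 1 := by
  intro hdvd
  have hreduce : b ^ (i % m) ≡ b ^ i [MOD b ^ m - 1] := by
    have hmod := pow_mod_orderOf (b : ZMod (b ^ m - 1)) i
    rw [orderOf_natCast_zmod_pow_sub_one hb (by omega)] at hmod
    exact (ZMod.natCast_eq_natCast_iff _ _ _).1 (by exact_mod_cast hmod)
  have hle : b ^ m - 1 ≤ b ^ (i % m) + 1 :=
    Nat.le_of_dvd (Nat.succ_pos _) (((hreduce.add_right 1).dvd_iff dvd_rfl).2 hdvd)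
  have hmono : b ^ (i % m) ≤ b ^ (m - 1) :=
    Nat.pow_le_pow_right (by omega) (Nat.le_sub_one_of_lt (Nat.mod_lt _ (by omega)))
  have hfour : 2 ^ 2 ≤ b ^ (m - 1) :=
    (Nat.pow_le_pow_left hb 2).trans (Nat.pow_le_pow_right (by omega) (by omega))
  have hsplit : b ^ m = b * b ^ (m - 1) := (mul_pow_sub_one (by omega) b).symm
  have hdouble : 2 * b ^ (m - 1) ≤ b * b ^ (m - 1) := Nat.mul_le_mul_right _ hb
  omega

end MultiplicativeOrder

section MinimalPolynomials

variable {F K : Type*} [Field F] [Field K] [Algebra F K]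

theorem natCast_natCard_eq_zero (R : Type*) [AddGroupWithOne R] [Finite R] :
    (Nat.card R : R) = 0 := by
  rw [← nsmul_one, card_nsmul_eq_zero']

theorem natCast_natCard_pow_sub_one {R : Type*} [Ring R] [Finite R] {m : ℕ} (hm : m ≠ 0) :
    ((Nat.card R ^ m - 1 : ℕ) : R) = -1 := by
  rw [Nat.cast_sub (Nat.one_le_pow _ _ Nat.card_pos), Nat.cast_pow, natCast_natCard_eq_zero,
    zero_pow hm, Nat.cast_one, zero_sub]

theorem isIntegral_of_isPrimitiveRoot {k : ℕ} (hk : k ≠ 0) {x : K} (hx : IsPrimitiveRoot x k) :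
    IsIntegral F x :=
  (hx.isIntegral hk.bot_lt).tower_top

theorem natDegree_minpoly_eq_orderOf [Finite F] {k : ℕ} (hk : (k : F) ≠ 0) {x : K}
    (hx : IsPrimitiveRoot x k) : (minpoly F x).natDegree = orderOf (Nat.card F : ZMod k) := by
  have := Fintype.ofFinite F
  obtain ⟨p, hp, f, hprime, hcard⟩ := FiniteField.card' F
  have : Fact p.Prime := ⟨hprime⟩
  have hcoprime : p.Coprime k :=
    hprime.coprime_iff_not_dvd.2 (mt (CharP.cast_eq_zero_iff F p k).2 hk)
  have hk₀ : 0 < k := Nat.pos_of_ne_zero fun h => hk (by rw [h, Nat.cast_zero])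
  have hdvd : minpoly F x ∣ cyclotomic k F := by
    rw [minpoly.dvd_iff, aeval_def, ← eval_map, map_cyclotomic]
    exact hx.isRoot_cyclotomic hk₀
  rw [natDegree_of_dvd_cyclotomic_of_irreducible hcard hcoprime hdvd
    (minpoly.irreducible (isIntegral_of_isPrimitiveRoot hk₀.ne' hx)), ← orderOf_units,
    ZMod.coe_unitOfCoprime, Nat.card_eq_fintype_card, hcard]

theorem natDegree_minpoly_of_isPrimitiveRoot_card_pow_sub_one [Finite F] {m : ℕ} (hm : m ≠ 0)
    {x : K} (hx : IsPrimitiveRoot x (Nat.card F ^ m - 1)) : (minpoly F x).natDegree = m := by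
  have hcast : ((Nat.card F ^ m - 1 : ℕ) : F) ≠ 0 := by
    rw [natCast_natCard_pow_sub_one hm]
    exact neg_ne_zero.2 one_ne_zero
  rw [natDegree_minpoly_eq_orderOf hcast hx,
    orderOf_natCast_zmod_pow_sub_one Finite.one_lt_card hm]

theorem natDegree_minpoly_of_isPrimitiveRoot_succ_card_mul_card_pow_sub_one [Finite F] {m : ℕ}
    (hm : Odd m) {x : K} (hx : IsPrimitiveRoot x ((Nat.card F + 1) * (Nat.card F ^ m - 1))) :
    (minpoly F x).natDegree = 2 * m := by
  have hcast : (((Nat.card F + 1) * (Nat.card F ^ m - 1) : ℕ) : F) ≠ 0 := by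
    rw [Nat.cast_mul, natCast_natCard_pow_sub_one hm.pos.ne', Nat.cast_succ,
      natCast_natCard_eq_zero, zero_add, one_mul]
    exact neg_ne_zero.2 one_ne_zero
  rw [natDegree_minpoly_eq_orderOf hcast hx,
    orderOf_natCast_zmod_succ_mul_pow_sub_one Finite.one_lt_card hm]

theorem exists_eq_pow_card_pow_of_minpoly_eq [Finite F] {x y : K} (hx : IsIntegral F x)
    (h : minpoly F x = minpoly F y) : ∃ i : ℕ, y = x ^ Nat.card F ^ i := by
  obtain ⟨p, hp⟩ := CharP.exists F
  have : Fact p.Prime := ⟨CharP.char_is_prime F p⟩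
  have hy : IsIntegral F y := (IsConjRoot.isIntegral_iff h).1 hx
  let L := IntermediateField.adjoin F {x, y}
  have : FiniteDimensional F L := IntermediateField.finiteDimensional_adjoin (by simp [hx, hy])
  have : Finite L := Module.finite_of_finite F
  let x' : L := ⟨x, IntermediateField.subset_adjoin F _ (by simp)⟩
  let y' : L := ⟨y, IntermediateField.subset_adjoin F _ (by simp)⟩
  have hconj : IsConjRoot F y' x' := by
    rw [isConjRoot_def, IntermediateField.minpoly_eq, IntermediateField.minpoly_eq]
    exact h.symm
  obtain ⟨σ, hσ⟩ := hconj.exists_algEquiv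
  obtain ⟨i, hi⟩ := FiniteField.exists_forall_apply_eq_pow F p L σ
  exact ⟨i, congrArg Subtype.val (hσ.symm.trans (hi x'))⟩

theorem minpoly_inv_ne [Finite F] {m k : ℕ} (hm : 2 < m) (hk : k ≠ 0)
    (hdvd : Nat.card F ^ m - 1 ∣ k) {x : K} (hx : IsPrimitiveRoot x k) :
    minpoly F x⁻¹ ≠ minpoly F x := by
  intro h
  have hint : IsIntegral F x := isIntegral_of_isPrimitiveRoot hk hx
  obtain ⟨i, hi⟩ := exists_eq_pow_card_pow_of_minpoly_eq hint h.symm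
  have hpow : x ^ (Nat.card F ^ i + 1) = 1 := by
    rw [pow_succ, ← hi, inv_mul_cancel₀ (hx.ne_zero hk)]
  exact not_pow_sub_one_dvd_pow_add_one Finite.one_lt_card hm i
    (hdvd.trans (hx.dvd_of_pow_eq_one _ hpow))

theorem isCoprime_minpoly {x y : K} (hx : IsIntegral F x) (hy : IsIntegral F y)
    (h : minpoly F x ≠ minpoly F y) : IsCoprime (minpoly F x) (minpoly F y) := by
  rw [(minpoly.irreducible hx).coprime_iff_not_dvd]
  exact fun hdvd => h (eq_of_monic_of_associated (minpoly.monic hx) (minpoly.monic hy)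
    ((minpoly.irreducible hx).associated_of_dvd (minpoly.irreducible hy) hdvd))

theorem prod_map_minpoly_dvd {l : List K} (hl : (l.map (minpoly F)).Nodup) {f : F[X]}
    (hf : f ≠ 0) (hroot : ∀ x ∈ l, aeval x f = 0) : (l.map (minpoly F)).prod ∣ f := by
  have hint : ∀ x ∈ l, IsIntegral F x := fun x hx => IsAlgebraic.isIntegral ⟨f, hf, hroot x hx⟩
  classical
  rw [← List.prod_toFinset _ hl.of_map]
  refine Finset.prod_dvd_of_coprime (fun x hx y hy hxy => ?_) fun x hx => ?_
  · rw [Finset.mem_coe, List.mem_toFinset] at hx hy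
    exact isCoprime_minpoly (hint x hx) (hint y hy) (mt (List.inj_on_of_nodup_map hl hx hy) hxy)
  · exact minpoly.dvd F x (hroot x (List.mem_toFinset.1 hx))

theorem aeval_eq_zero_and_aeval_derivative_eq_zero_of_minpoly_sq_dvd {R A : Type*} [CommRing R]
    [CommRing A] [Algebra R A] {x : A} {c : R[X]} (h : minpoly R x ^ 2 ∣ c) :
    aeval x c = 0 ∧ aeval x (derivative c) = 0 :=
  ⟨aeval_eq_zero_of_dvd_aeval_eq_zero ((dvd_pow_self _ two_ne_zero).trans h) (minpoly.aeval R x),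
    aeval_eq_zero_of_dvd_aeval_eq_zero (by simpa using pow_sub_one_dvd_derivative_of_pow_dvd h)
      (minpoly.aeval R x)⟩

end MinimalPolynomials

section CodeGenerator

/-- The generator polynomial `(x - 1) m_β(x)² m_{β³}(x)² m_{β⁻¹}(x) m_{β⁻³}(x)`, with `K` standing
for any extension of `F₂` containing `β`. -/
noncomputable def codeGenerator {K : Type*} [Field K] [Algebra (ZMod 2) K] (β : K) :
    (ZMod 2)[X] :=
  (X - 1) * minpoly (ZMod 2) β ^ 2 * minpoly (ZMod 2) (β ^ 3) ^ 2 * minpoly (ZMod 2) β⁻¹ *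
    minpoly (ZMod 2) (β ^ 3)⁻¹

variable {K : Type*} [Field K] [Algebra (ZMod 2) K] {β : K}

theorem codeGenerator_eq_prod_mul_prod (β : K) :
    codeGenerator β = ([β, β ^ 3].map (minpoly (ZMod 2))).prod *
      ([β, β ^ 3, 1, β⁻¹, (β ^ 3)⁻¹].map (minpoly (ZMod 2))).prod := by
  simp only [codeGenerator, List.map_cons, List.map_nil, List.prod_cons, List.prod_nil, minpoly.one]
  ring

theorem codeGenerator_dvd_X_pow_two_mul_sub_one {n : ℕ} (hn : n ≠ 0) (hβ : β ^ n = 1)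
    (hnodup : ([β, β ^ 3, 1, β⁻¹, (β ^ 3)⁻¹].map (minpoly (ZMod 2))).Nodup) :
    codeGenerator β ∣ X ^ (2 * n) - 1 := by
  have hprod : ([β, β ^ 3, 1, β⁻¹, (β ^ 3)⁻¹].map (minpoly (ZMod 2))).prod ∣ X ^ n - 1 := by
    refine prod_map_minpoly_dvd hnodup (monic_X_pow_sub_C 1 hn).ne_zero ?_
    simp [hβ, pow_right_comm β 3 n]
  have hprod_pair : ([β, β ^ 3].map (minpoly (ZMod 2))).prod ∣ X ^ n - 1 :=
    (Dvd.intro ([1, β⁻¹, (β ^ 3)⁻¹].map (minpoly (ZMod 2))).prod (by simp [mul_assoc])).trans hprod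
  have hsq : (X ^ (2 * n) - 1 : (ZMod 2)[X]) = (X ^ n - 1) * (X ^ n - 1) := by
    rw [← sq, sub_pow_char, one_pow, ← pow_mul, mul_comm]
  rw [codeGenerator_eq_prod_mul_prod, hsq]
  exact mul_dvd_mul hprod_pair hprod

theorem ten_le_card_support_of_codeGenerator_dvd {n : ℕ} (hn : Odd n) (hβ : IsPrimitiveRoot β n)
    {c : (ZMod 2)[X]} (hc : c ≠ 0) (hdeg : c.natDegree < 2 * n) (hdvd : codeGenerator β ∣ c) :
    10 ≤ c.support.card := by
  have hβ_sq : minpoly (ZMod 2) β ^ 2 ∣ c :=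
    dvd_of_mul_left_dvd (dvd_of_mul_right_dvd (dvd_of_mul_right_dvd (dvd_of_mul_right_dvd hdvd)))
  have hβ₃_sq : minpoly (ZMod 2) (β ^ 3) ^ 2 ∣ c :=
    dvd_of_mul_left_dvd (dvd_of_mul_right_dvd (dvd_of_mul_right_dvd hdvd))
  obtain ⟨h₁, hderiv₁⟩ := aeval_eq_zero_and_aeval_derivative_eq_zero_of_minpoly_sq_dvd hβ_sq
  obtain ⟨h₃, hderiv₃⟩ := aeval_eq_zero_and_aeval_derivative_eq_zero_of_minpoly_sq_dvd hβ₃_sq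
  have hsimple : ∀ x : K, aeval x (codeGenerator β) = 0 → aeval x c = 0 := fun x =>
    aeval_eq_zero_of_dvd_aeval_eq_zero hdvd
  have hroot : ∀ j : ℕ, j < 9 → aeval (β ^ (-4 + j : ℤ)) c = 0 := fun j hj =>
    aeval_zpow_eq_zero_of_abs_le_four (hsimple 1 (by simp [codeGenerator])) h₁ h₃
      (hsimple β⁻¹ (by simp [codeGenerator])) (hsimple (β ^ 3)⁻¹ (by simp [codeGenerator]))
      (abs_le.2 ⟨by omega, by omega⟩)
  have hdouble : ∀ j : ℕ, j < 4 → aeval (β ^ (1 + j : ℤ)) c = 0 ∧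
      aeval (β ^ (1 + j : ℤ)) (derivative c) = 0 := fun j hj => by
    rw [← Nat.cast_one, ← Nat.cast_add, zpow_natCast]
    exact ⟨aeval_pow_eq_zero_of_le_four h₁ h₃ (by omega) (by omega),
      aeval_pow_eq_zero_of_le_four hderiv₁ hderiv₃ (by omega) (by omega)⟩
  exact min_le_card_support_of_double_roots hn hβ hc hdeg hroot hdouble

theorem codeGenerator_monic (hβ : IsIntegral (ZMod 2) β) : (codeGenerator β).Monic :=
  ((((monic_X_sub_C 1).mul ((minpoly.monic hβ).pow 2)).mul
    ((minpoly.monic (hβ.pow 3)).pow 2)).mul (minpoly.monic hβ.inv)).mul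
      (minpoly.monic (hβ.pow 3).inv)

theorem natDegree_codeGenerator (hβ : IsIntegral (ZMod 2) β) :
    (codeGenerator β).natDegree =
      1 + 2 * (minpoly (ZMod 2) β).natDegree + 2 * (minpoly (ZMod 2) (β ^ 3)).natDegree +
        (minpoly (ZMod 2) β⁻¹).natDegree + (minpoly (ZMod 2) (β ^ 3)⁻¹).natDegree := by
  have hone : (X - 1 : (ZMod 2)[X]).natDegree = 1 := natDegree_X_sub_C 1
  have hne := (codeGenerator_monic hβ).ne_zero
  simp only [codeGenerator, mul_ne_zero_iff] at hne
  obtain ⟨⟨⟨⟨hne_one, hne_sq⟩, hne_cube_sq⟩, hne_inv⟩, hne_cube_inv⟩ := hne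
  rw [codeGenerator, natDegree_mul (by simp [*]) hne_cube_inv, natDegree_mul (by simp [*]) hne_inv,
    natDegree_mul (by simp [*]) hne_cube_sq, natDegree_mul hne_one hne_sq, natDegree_pow,
    natDegree_pow, hone]

section PrimitiveRoot

theorem odd_three_mul_two_pow_sub_one {m : ℕ} (hm : m ≠ 0) : Odd (3 * (2 ^ m - 1)) :=
  Odd.mul (Nat.odd_iff.2 rfl)
    (Nat.Even.sub_odd Nat.one_le_two_pow (even_two.pow_of_ne_zero hm) odd_one)

theorem nine_mul_add_one_lt_six_mul_two_pow_sub_one {m : ℕ} (hm : 3 ≤ m) :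
    9 * m + 1 < 6 * (2 ^ m - 1) := by
  have hpow : m - 2 < 2 ^ (m - 2) := Nat.lt_two_pow_self
  have hsplit : 2 ^ m = 2 ^ (m - 2) * 2 ^ 2 := (pow_sub_mul_pow 2 (by omega)).symm
  omega

variable {m : ℕ}

theorem natDegree_minpoly_pow_three (hm : m ≠ 0) (hβ : IsPrimitiveRoot β (3 * (2 ^ m - 1))) :
    (minpoly (ZMod 2) (β ^ 3)).natDegree = m :=
  natDegree_minpoly_of_isPrimitiveRoot_card_pow_sub_one hm <| by
    rw [Nat.card_zmod]
    exact hβ.pow (odd_three_mul_two_pow_sub_one hm).pos rfl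

theorem natDegree_minpoly_inv_pow_three (hm : m ≠ 0) (hβ : IsPrimitiveRoot β (3 * (2 ^ m - 1))) :
    (minpoly (ZMod 2) (β ^ 3)⁻¹).natDegree = m := by
  rw [← inv_pow]
  exact natDegree_minpoly_pow_three hm hβ.inv

variable (hmo : Odd m) (hβ : IsPrimitiveRoot β (3 * (2 ^ m - 1)))
include hmo hβ

theorem natDegree_minpoly_eq_two_mul : (minpoly (ZMod 2) β).natDegree = 2 * m :=
  natDegree_minpoly_of_isPrimitiveRoot_succ_card_mul_card_pow_sub_one hmo (by rwa [Nat.card_zmod])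

theorem natDegree_codeGenerator_of_isPrimitiveRoot : (codeGenerator β).natDegree = 9 * m + 1 := by
  have hk : 3 * (2 ^ m - 1) ≠ 0 := (odd_three_mul_two_pow_sub_one hmo.pos.ne').pos.ne'
  rw [natDegree_codeGenerator (isIntegral_of_isPrimitiveRoot hk hβ),
    natDegree_minpoly_eq_two_mul hmo hβ, natDegree_minpoly_eq_two_mul hmo hβ.inv,
    natDegree_minpoly_pow_three hmo.pos.ne' hβ, natDegree_minpoly_inv_pow_three hmo.pos.ne' hβ]
  ring

theorem nodup_map_minpoly (hm : 2 < m) :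
    ([β, β ^ 3, 1, β⁻¹, (β ^ 3)⁻¹].map (minpoly (ZMod 2))).Nodup := by
  have hk : 3 * (2 ^ m - 1) ≠ 0 := (odd_three_mul_two_pow_sub_one hmo.pos.ne').pos.ne'
  have hβ₃ : IsPrimitiveRoot (β ^ 3) (2 ^ m - 1) := hβ.pow hk.bot_lt rfl
  have hinv : minpoly (ZMod 2) β⁻¹ ≠ minpoly (ZMod 2) β := minpoly_inv_ne hm hk (by simp) hβ
  have hcube_inv : minpoly (ZMod 2) (β ^ 3)⁻¹ ≠ minpoly (ZMod 2) (β ^ 3) :=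
    minpoly_inv_ne hm (right_ne_zero_of_mul hk) (by simp) hβ₃
  have hdeg_one : (minpoly (ZMod 2) (1 : K)).natDegree = 1 := by
    rw [minpoly.one]
    exact natDegree_X_sub_C 1
  have hdeg := natDegree_minpoly_eq_two_mul hmo hβ
  have hdeg_cube := natDegree_minpoly_pow_three hmo.pos.ne' hβ
  have hdeg_inv := natDegree_minpoly_eq_two_mul hmo hβ.inv
  have hdeg_cube_inv := natDegree_minpoly_inv_pow_three hmo.pos.ne' hβ
  have hne {f g : (ZMod 2)[X]} (h : f.natDegree ≠ g.natDegree) : f ≠ g := ne_of_apply_ne _ h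
  simp only [List.map_cons, List.map_nil, List.nodup_cons, List.mem_cons, List.not_mem_nil,
    or_false, not_or, not_false_eq_true, List.nodup_nil, and_true]
  refine ⟨⟨hne ?_, hne ?_, hinv.symm, hne ?_⟩, ⟨hne ?_, hne ?_, hcube_inv.symm⟩,
    ⟨hne ?_, hne ?_⟩, hne ?_⟩ <;> omega

end PrimitiveRoot

end CodeGenerator

theorem statement15_general {K : Type*} [Field K] [Algebra (ZMod 2) K]
    (m : ℕ) (hm : 3 ≤ m) (hmo : Odd m)
    (n : ℕ) (hn : n = 3 * (2 ^ m - 1))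
    (β : K) (hβ : IsPrimitiveRoot β n) :
    Module.finrank (ZMod 2)
        (cyclicCode (ZMod 2) (2 * n)
          ((X - 1) * (minpoly (ZMod 2) β) ^ 2 * (minpoly (ZMod 2) (β ^ 3)) ^ 2 *
            minpoly (ZMod 2) β⁻¹ * minpoly (ZMod 2) (β ^ 3)⁻¹)) =
      6 * (2 ^ m - 1) - 9 * m - 1 ∧
    10 ≤ minDist (cyclicCode (ZMod 2) (2 * n)
        ((X - 1) * (minpoly (ZMod 2) β) ^ 2 * (minpoly (ZMod 2) (β ^ 3)) ^ 2 *
          minpoly (ZMod 2) β⁻¹ * minpoly (ZMod 2) (β ^ 3)⁻¹)) := by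
  change Module.finrank (ZMod 2) (cyclicCode (ZMod 2) (2 * n) (codeGenerator β)) = _ ∧
    10 ≤ minDist (cyclicCode (ZMod 2) (2 * n) (codeGenerator β))
  subst hn
  have hn_odd : Odd (3 * (2 ^ m - 1)) := odd_three_mul_two_pow_sub_one (by omega)
  have hn₀ : 3 * (2 ^ m - 1) ≠ 0 := hn_odd.pos.ne'
  have hg : codeGenerator β ∣ X ^ (2 * (3 * (2 ^ m - 1))) - 1 :=
    codeGenerator_dvd_X_pow_two_mul_sub_one hn₀ hβ.pow_eq_one (nodup_map_minpoly hmo hβ hm)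
  have hg₀ : codeGenerator β ≠ 0 :=
    (codeGenerator_monic (isIntegral_of_isPrimitiveRoot hn₀ hβ)).ne_zero
  have hdeg := natDegree_codeGenerator_of_isPrimitiveRoot hmo hβ
  have hlt : 9 * m + 1 < 6 * (2 ^ m - 1) := nine_mul_add_one_lt_six_mul_two_pow_sub_one hm
  refine ⟨?_, le_minDist_cyclicCode hg hg₀ (by omega) fun c hc hcdeg hgc =>
    ten_le_card_support_of_codeGenerator_dvd hn_odd hβ hc hcdeg hgc⟩
  rw [finrank_cyclicCode hg hg₀, hdeg]
  omega

/-- for odd `m ≥ 5`, `n = 3(2^m - 1)` and `β` a primitive `n`-th root of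
unity in `F_{2^{2m}}`, the repeated-root binary cyclic code of length `2n` with generator
polynomial `(x-1) m_β(x)^2 m_{β³}(x)^2 m_{β⁻¹}(x) m_{β⁻³}(x)` has dimension
`6(2^m - 1) - 9m - 1` and minimum distance at least `10`. -/
theorem statement15 {K : Type*} [Field K] [Fintype K] [Algebra (ZMod 2) K]
    (m : ℕ) (hm : 5 ≤ m) (hmo : Odd m) (hK : Fintype.card K = 2 ^ (2 * m))
    (n : ℕ) (hn : n = 3 * (2 ^ m - 1))
    (β : K) (hβ : IsPrimitiveRoot β n) :
    Module.finrank (ZMod 2)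
        (cyclicCode (ZMod 2) (2 * n)
          ((X - 1) * (minpoly (ZMod 2) β) ^ 2 * (minpoly (ZMod 2) (β ^ 3)) ^ 2 *
            minpoly (ZMod 2) β⁻¹ * minpoly (ZMod 2) (β ^ 3)⁻¹)) =
      6 * (2 ^ m - 1) - 9 * m - 1 ∧
    10 ≤ minDist (cyclicCode (ZMod 2) (2 * n)
        ((X - 1) * (minpoly (ZMod 2) β) ^ 2 * (minpoly (ZMod 2) (β ^ 3)) ^ 2 *
          minpoly (ZMod 2) β⁻¹ * minpoly (ZMod 2) (β ^ 3)⁻¹)) := by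
  exact statement15_general m (by omega) hmo n hn β hβ
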